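/- Let Fin denote the set of elements (κ̂,κ̄) ∈ G(T,R) such that κ̂ maps V into V and fixes all but finitely many of the standard basis vectors (δ_i,0), (0,δ_i), i ∈ ℕ, of V, and let St_W := {(φ,φ̄) ∈ G(T,R) : φ(W^♯) ∩ V = W}. Then {(φ,φ̄) ∈ G(T,R) : d(φ) = 0} = Fin · St_W; that is, an element of G(T,R) has degree 0 if and only if it is a product of an element of Fin and an element of St_W. -/

import Mathlib

open Module Submodule

noncomputable section

abbrev TT : Type := (ℕ → ℂ) × (ℕ →₀ ℂ)
abbrev RR : Type := (ℕ →₀ ℂ) × (ℕ → ℂ)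

lemma lc_v_add (v w : ℕ → ℂ) (l : ℕ →₀ ℂ) :
    Finsupp.linearCombination ℂ (v + w) l
      = Finsupp.linearCombination ℂ v l + Finsupp.linearCombination ℂ w l := by
  classical
  simp only [Finsupp.linearCombination_apply]
  rw [← Finsupp.sum_add]
  exact Finsupp.sum_congr fun i _ => by simp [Pi.add_apply, smul_add, mul_add]

lemma lc_v_smul (c : ℂ) (v : ℕ → ℂ) (l : ℕ →₀ ℂ) :
    Finsupp.linearCombination ℂ (c • v) l = c • Finsupp.linearCombination ℂ v l := by
  classical
  simp only [Finsupp.linearCombination_apply, Finsupp.smul_sum]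
  exact Finsupp.sum_congr fun i _ => by simp [Pi.smul_apply, smul_comm, smul_eq_mul, mul_left_comm]

/-- The nondegenerate pairing `p : T × R → ℂ`,
`p((ω,u),(w,ν)) = Σ_i ω(i)w(i) + Σ_i u(i)ν(i)`. -/
def pairB : TT →ₗ[ℂ] RR →ₗ[ℂ] ℂ :=
  LinearMap.mk₂ ℂ
    (fun x y => Finsupp.linearCombination ℂ x.1 y.1 + Finsupp.linearCombination ℂ y.2 x.2)
    (fun x x' y => by
      simp only [Prod.fst_add, Prod.snd_add, lc_v_add, map_add]; ring)
    (fun c x y => by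
      simp only [Prod.smul_fst, Prod.smul_snd, lc_v_smul, map_smul, smul_add])
    (fun x y y' => by
      simp only [Prod.fst_add, Prod.snd_add, lc_v_add, map_add]; ring)
    (fun c x y => by
      simp only [Prod.smul_fst, Prod.smul_snd, lc_v_smul, map_smul, smul_add])

/-- The Mackey-group condition on a pair of automorphisms:
`p(φ x, y) = p(x, φ̄ y)` for all `x ∈ T`, `y ∈ R`. -/
def IsMackey (φ : TT ≃ₗ[ℂ] TT) (ψ : RR ≃ₗ[ℂ] RR) : Prop :=
  ∀ (x : TT) (y : RR), pairB (φ x) y = pairB x (ψ y)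

/-- `W^♯ = (ℕ→ℂ) × {0} ⊆ T`. -/
def Wsharp : Submodule ℂ TT := LinearMap.range (LinearMap.inl ℂ (ℕ → ℂ) (ℕ →₀ ℂ))

/-- `U^♯ = {0} × (ℕ→ℂ) ⊆ R`. -/
def Usharp : Submodule ℂ RR := LinearMap.range (LinearMap.inr ℂ (ℕ →₀ ℂ) (ℕ → ℂ))

/-- `V = (ℕ→₀ℂ) × (ℕ→₀ℂ) ⊆ T`. -/
def Vsub : Submodule ℂ TT :=
  LinearMap.range
    ((Finsupp.lcoeFun : (ℕ →₀ ℂ) →ₗ[ℂ] (ℕ → ℂ)).prodMap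
      (LinearMap.id : (ℕ →₀ ℂ) →ₗ[ℂ] (ℕ →₀ ℂ)))

/-- `W = (ℕ→₀ℂ) × {0} ⊆ T`. -/
def Wsub : Submodule ℂ TT :=
  LinearMap.range
    ((LinearMap.inl ℂ (ℕ → ℂ) (ℕ →₀ ℂ)).comp
      (Finsupp.lcoeFun : (ℕ →₀ ℂ) →ₗ[ℂ] (ℕ → ℂ)))

/-- `π_U : T → (ℕ→₀ℂ)`, the second projection. -/
def piU : TT →ₗ[ℂ] (ℕ →₀ ℂ) := LinearMap.snd ℂ (ℕ → ℂ) (ℕ →₀ ℂ)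

/-- `π_{W*} : R → (ℕ→₀ℂ)`, the first projection. -/
def piW : RR →ₗ[ℂ] (ℕ →₀ ℂ) := LinearMap.fst ℂ (ℕ →₀ ℂ) (ℕ → ℂ)

/-- The degree `d(φ) = dim π_U(φ(W^♯)) − dim π_U(φ^{-1}(W^♯))`. -/
def deg (φ : TT ≃ₗ[ℂ] TT) : ℤ :=
  (Module.finrank ℂ ((Wsharp.map φ.toLinearMap).map piU) : ℤ) -
    (Module.finrank ℂ ((Wsharp.map φ.symm.toLinearMap).map piU) : ℤ)

/-- `span {(δ_i, 0) : i ≥ n} ⊆ T`. -/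
def tailSpan (n : ℕ) : Submodule ℂ TT :=
  Submodule.span ℂ
    ((fun i => ((((Finsupp.single i (1 : ℂ)) : ℕ →₀ ℂ) : ℕ → ℂ), (0 : ℕ →₀ ℂ))) '' {i | n ≤ i})

/-- `W'` is E-commensurable of index `k` with `W`:
`W' = G ⊕ span{(δ_i,0) : i ≥ n}` with `G ⊆ V` finite-dimensional of dimension `n + k`. -/
def Ecomm (W' : Submodule ℂ TT) (k : ℤ) : Prop :=
  ∃ (n : ℕ) (G : Submodule ℂ TT), G ≤ Vsub ∧ FiniteDimensional ℂ G ∧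
    (Module.finrank ℂ G : ℤ) = (n : ℤ) + k ∧ Disjoint G (tailSpan n) ∧
    W' = G ⊔ tailSpan n

/-- `W'^⊥ = {y ∈ R : p(x,y) = 0 for all x ∈ W'}`. -/
def perpR (W' : Submodule ℂ TT) : Submodule ℂ RR :=
  ⨅ x ∈ (W' : Set TT), LinearMap.ker (pairB x)

/-- `Y^⊥ = {x ∈ T : p(x,y) = 0 for all y ∈ Y}`. -/
def perpT (Y : Submodule ℂ RR) : Submodule ℂ TT :=
  ⨅ y ∈ (Y : Set RR), LinearMap.ker (pairB.flip y)

/-- The action `φ·W' = φ((W'^⊥)^⊥) ∩ V`. -/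
def actOn (φ : TT ≃ₗ[ℂ] TT) (W' : Submodule ℂ TT) : Submodule ℂ TT :=
  ((perpT (perpR W')).map φ.toLinearMap) ⊓ Vsub

end
noncomputable section

/-- The Mackey group `G(T,R)` of pairs `(φ, φ̄)`, as a subgroup of the product of the
automorphism group of `T` with the opposite of the automorphism group of `R`
(so that composition is componentwise). -/
def Mackey : Subgroup ((TT ≃ₗ[ℂ] TT) × (RR ≃ₗ[ℂ] RR)ᵐᵒᵖ) where
  carrier := {a | IsMackey a.1 a.2.unop}
  one_mem' := fun _ _ => rfl
  mul_mem' := by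
    intro a b ha hb
    intro x y
    simp only [Prod.fst_mul, Prod.snd_mul]
    have h1 : (a.1 * b.1) x = a.1 (b.1 x) := rfl
    have h2 : ((a.2 * b.2).unop) y = b.2.unop (a.2.unop y) := rfl
    rw [h1, h2, ha, hb]
  inv_mem' := by
    intro a ha
    intro x y
    have := ha (a.1⁻¹ x) (a.2.unop⁻¹ y)
    have h1 : a.1 (a.1⁻¹ x) = x := a.1.apply_symm_apply x
    have h2 : a.2.unop (a.2.unop⁻¹ y) = y := a.2.unop.apply_symm_apply y
    simp only [Prod.fst_inv, Prod.snd_inv]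
    have h4 : (a.2⁻¹).unop = a.2.unop⁻¹ := rfl
    rw [h4]
    rw [h1, h2] at this
    exact this.symm

end


noncomputable section

/-- The subset `Fin ⊆ G(T,R)` of elements whose first component maps `V` into `V` and fixes
all but finitely many of the standard basis vectors `(δ_i,0)`, `(0,δ_i)` of `V`. -/
def FinSet : Set Mackey :=
  {a | Submodule.map (a.val.1.toLinearMap) Vsub ≤ Vsub ∧
    {i : ℕ |
      a.val.1 ((((Finsupp.single i (1 : ℂ)) : ℕ →₀ ℂ) : ℕ → ℂ), (0 : ℕ →₀ ℂ))
          ≠ ((((Finsupp.single i (1 : ℂ)) : ℕ →₀ ℂ) : ℕ → ℂ), (0 : ℕ →₀ ℂ)) ∨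
      a.val.1 ((0 : ℕ → ℂ), Finsupp.single i (1 : ℂ))
          ≠ ((0 : ℕ → ℂ), Finsupp.single i (1 : ℂ))}.Finite}

/-- The stabilizer `St_W = {(φ,φ̄) ∈ G(T,R) : φ(W^♯) ∩ V = W}`. -/
def StW : Set Mackey :=
  {a | (Wsharp.map a.val.1.toLinearMap) ⊓ Vsub = Wsub}

end

/-!
`d(φ)` is the relative dimension of `φ(W^♯)` and `W^♯`. For `(φ, φ̄) ∈ G(T,R)`, the `i`-th row of
the block `W^♯ → U` of `φ` is finitely supported, and at each point of `ℂ^ℕ` only finitely many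
rows are nonzero; by the Baire category theorem almost all rows vanish, so the block is a finite
matrix. Hence for large `n` the spaces `φ(W^♯)` and `W^♯` contain the same vectors vanishing in the
first `n` coordinates of `W^♯` and of `U`, and `d(φ)` is the difference of the dimensions of their
images in `ℂ^n × ℂ^n`.

An element of `Fin` fixes this common tail pointwise, so these images have equal dimension and its
degree is `0`. Conversely, if `d(φ) = 0`, some automorphism of `ℂ^n × ℂ^n` carries one image to the
other; extended by the identity it is an element `κ` of `Fin` with `κ(W^♯) = φ(W^♯)`. Finally
`St_W` is the stabilizer of `W^♯`, so `κ⁻¹φ ∈ St_W`, and `d(φ)` depends only on `φ(W^♯)`.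
-/

open Filter (atTop eventually_atTop eventually_forall_ge_atTop eventually_ge_atTop)

section RelativeRank

variable {K V N D : Type*} [DivisionRing K] [AddCommGroup V] [Module K V]
  [AddCommGroup N] [Module K N] [AddCommGroup D] [Module K D] [FiniteDimensional K D]

theorem finrank_range_add_finrank_map_ker {f : V →ₗ[K] N} {h : V →ₗ[K] D}
    (hker : LinearMap.ker h ≤ LinearMap.ker f) :
    finrank K (LinearMap.range f) + finrank K ((LinearMap.ker f).map h) =
      finrank K (LinearMap.range h) := by
  let q : LinearMap.range h →ₗ[K] N :=
    (LinearMap.ker h).liftQ f hker ∘ₗ h.quotKerEquivRange.symm.toLinearMap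
  have q_rangeRestrict (x : V) : q (h.rangeRestrict x) = f x := by
    have : h.quotKerEquivRange.symm (h.rangeRestrict x) = (LinearMap.ker h).mkQ x :=
      h.quotKerEquivRange.symm_apply_eq.2 rfl
    simp only [q, LinearMap.comp_apply, LinearEquiv.coe_coe, this, mkQ_apply, liftQ_apply]
  have range_q : LinearMap.range q = LinearMap.range f := by
    rw [← LinearMap.range_comp_of_range_eq_top q h.range_rangeRestrict]
    exact congrArg LinearMap.range (LinearMap.ext q_rangeRestrict)
  have map_ker_q : (LinearMap.ker q).map (LinearMap.range h).subtype =
      (LinearMap.ker f).map h := by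
    ext d
    constructor
    · rintro ⟨⟨_, x, rfl⟩, hx, rfl⟩
      exact ⟨x, (q_rangeRestrict x).symm.trans hx, rfl⟩
    · rintro ⟨x, hx, rfl⟩
      exact ⟨h.rangeRestrict x, (q_rangeRestrict x).trans hx, rfl⟩
  rw [← range_q, ← map_ker_q, finrank_map_subtype_eq, q.finrank_range_add_finrank_ker]

theorem finrank_map_add_finrank_map_inf_ker {f : V →ₗ[K] N} {h : V →ₗ[K] D} {A : Submodule K V}
    (hker : A ⊓ LinearMap.ker h ≤ LinearMap.ker f) :
    finrank K (A.map f) + finrank K ((A ⊓ LinearMap.ker f).map h) = finrank K (A.map h) := by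
  have map_ker : (LinearMap.ker (f.domRestrict A)).map (h.domRestrict A) =
      (A ⊓ LinearMap.ker f).map h := by
    rw [LinearMap.domRestrict, LinearMap.domRestrict, LinearMap.ker_comp, Submodule.map_comp,
      map_comap_subtype]
  rw [← LinearMap.range_domRestrict A f, ← LinearMap.range_domRestrict A h, ← map_ker]
  exact finrank_range_add_finrank_map_ker fun x hx => hker ⟨x.2, hx⟩

theorem finrank_map_eq_of_inf_ker_eq {f : V →ₗ[K] N} {h : V →ₗ[K] D} {A : Submodule K V}
    (hker : A ⊓ LinearMap.ker f = A ⊓ LinearMap.ker h) :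
    finrank K (A.map f) = finrank K (A.map h) := by
  have hbot : (A ⊓ LinearMap.ker f).map h = ⊥ := by
    rw [hker, eq_bot_iff, map_le_iff_le_comap]
    exact inf_le_right
  have := finrank_map_add_finrank_map_inf_ker (hker.ge.trans inf_le_right)
  rwa [hbot, finrank_bot, add_zero] at this

theorem exists_linearEquiv_map_eq_of_finrank_eq {P Q : Submodule K D}
    (h : finrank K P = finrank K Q) : ∃ g : D ≃ₗ[K] D, P.map g.toLinearMap = Q := by
  let e : P ≃ₗ[K] Q := LinearEquiv.ofFinrankEq P Q h
  obtain ⟨g, hg⟩ := exists_linearEquiv_restrict_eq e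
  refine ⟨g, le_antisymm ?_ fun y hy => ?_⟩
  · rintro _ ⟨x, hx, rfl⟩
    exact (hg ⟨x, hx⟩).symm ▸ (e ⟨x, hx⟩).2
  · refine ⟨e.symm ⟨y, hy⟩, (e.symm ⟨y, hy⟩).2, (hg _).symm.trans ?_⟩
    rw [LinearEquiv.apply_symm_apply]

end RelativeRank

section ExtendById

variable {k T D : Type*} [Ring k] [AddCommGroup T] [Module k T] [AddCommGroup D] [Module k D]
  {i : D →ₗ[k] T} {r : T →ₗ[k] D}

/-- If `r ∘ i = id`, so that `T = range i ⊕ ker r`, the endomorphism of `T` which is `g` on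
`range i ≅ D` and the identity on `ker r`. -/
def extendById (i : D →ₗ[k] T) (r : T →ₗ[k] D) (g : D →ₗ[k] D) : T →ₗ[k] T :=
  LinearMap.id + i ∘ₗ (g - LinearMap.id) ∘ₗ r

lemma extendById_apply (g : D →ₗ[k] D) (x : T) :
    extendById i r g x = x + i (g (r x) - r x) := rfl

lemma extendById_comp_of_comp_eq_id (hri : r ∘ₗ i = LinearMap.id) {g g' : D →ₗ[k] D}
    (hg : g ∘ₗ g' = LinearMap.id) : extendById i r g ∘ₗ extendById i r g' = LinearMap.id := by
  have hri' (d : D) : r (i d) = d := LinearMap.congr_fun hri d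
  have hg' (d : D) : g (g' d) = d := LinearMap.congr_fun hg d
  ext x
  simp only [LinearMap.comp_apply, extendById_apply, map_add, map_sub, hri', hg',
    LinearMap.id_apply]
  abel

/-- `extendById` of an automorphism `g` of `D`, as an automorphism of `T`. -/
def extendByIdEquiv (hri : r ∘ₗ i = LinearMap.id) (g : D ≃ₗ[k] D) : T ≃ₗ[k] T :=
  LinearEquiv.ofLinearMap (extendById i r g) (extendById i r g.symm)
    (extendById_comp_of_comp_eq_id hri g.comp_symm)
    (extendById_comp_of_comp_eq_id hri g.symm_comp)

lemma extendByIdEquiv_apply (hri : r ∘ₗ i = LinearMap.id) (g : D ≃ₗ[k] D) (x : T) :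
    extendByIdEquiv hri g x = x + i (g (r x) - r x) := rfl

lemma map_extendByIdEquiv_le (hri : r ∘ₗ i = LinearMap.id) {g : D ≃ₗ[k] D} {A A' : Submodule k T}
    (hA : A.map (i ∘ₗ r) ≤ A) (hA' : A'.map (i ∘ₗ r) ≤ A') (hker : A ⊓ LinearMap.ker r ≤ A')
    (hg : (A.map r).map g.toLinearMap ≤ A'.map r) :
    A.map (extendByIdEquiv hri g).toLinearMap ≤ A' := by
  rintro _ ⟨x, hx, rfl⟩
  have hri' (d : D) : r (i d) = d := LinearMap.congr_fun hri d
  obtain ⟨y, hy, hyx⟩ := hg ⟨r x, ⟨x, hx, rfl⟩, rfl⟩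
  have hdiff : x - i (r x) ∈ A' := by
    refine hker ⟨A.sub_mem hx (hA ⟨x, hx, rfl⟩), ?_⟩
    rw [SetLike.mem_coe, LinearMap.mem_ker, map_sub, hri', sub_self]
  have hsplit : extendByIdEquiv hri g x = (x - i (r x)) + i (r y) := by
    rw [extendByIdEquiv_apply, hyx, LinearEquiv.coe_coe, map_sub]
    abel
  exact hsplit ▸ A'.add_mem hdiff (hA' ⟨y, hy, rfl⟩)

theorem map_extendByIdEquiv_eq (hri : r ∘ₗ i = LinearMap.id) {g : D ≃ₗ[k] D}
    {A A' : Submodule k T} (hA : A.map (i ∘ₗ r) ≤ A) (hA' : A'.map (i ∘ₗ r) ≤ A')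
    (hker : A ⊓ LinearMap.ker r = A' ⊓ LinearMap.ker r)
    (hg : (A.map r).map g.toLinearMap = A'.map r) :
    A.map (extendByIdEquiv hri g).toLinearMap = A' := by
  refine le_antisymm
    (map_extendByIdEquiv_le hri hA hA' (hker.le.trans inf_le_left) hg.le) ?_
  have hg' : (A'.map r).map g.symm.toLinearMap ≤ A.map r := by
    rw [← hg, ← Submodule.map_comp, g.symm_comp, Submodule.map_id]
  have hsymm := map_extendByIdEquiv_le hri hA' hA (hker.ge.trans inf_le_left) hg'
  exact fun y hy => ⟨_, hsymm ⟨y, hy, rfl⟩, (extendByIdEquiv hri g).apply_symm_apply y⟩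

end ExtendById

section PairingExtendById

variable {k T R D E : Type*} [CommRing k] [AddCommGroup T] [Module k T] [AddCommGroup R]
  [Module k R] [AddCommGroup D] [Module k D] [AddCommGroup E] [Module k E]
  {i : D →ₗ[k] T} {r : T →ₗ[k] D}

lemma pairing_extendById {B : T →ₗ[k] R →ₗ[k] k} {C : D →ₗ[k] E →ₗ[k] k} {i' : R →ₗ[k] E}
    {r' : E →ₗ[k] R} {g : D →ₗ[k] D} {g' : E →ₗ[k] E} (hi : ∀ d y, B (i d) y = C d (i' y))
    (hr : ∀ x e, C (r x) e = B x (r' e)) (hg : ∀ d e, C (g d) e = C d (g' e)) (x : T) (y : R) :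
    B (extendById i r g x) y = B x (extendById r' i' g' y) := by
  simp only [extendById_apply, map_add, map_sub, LinearMap.add_apply, LinearMap.sub_apply, hi, hg,
    ← hr]

end PairingExtendById

noncomputable section DualFamilies

variable {k T R ι : Type*} [CommRing k] [AddCommGroup T] [Module k T] [AddCommGroup R]
  [Module k R] (B : T →ₗ[k] R →ₗ[k] k) (t : ι → T) (y : ι → R)

/-- The coordinates `x ↦ (B x (y j))_j` of a vector of `T` with respect to a family in the
other member `R` of a pairing. -/
def pairingCoord : T →ₗ[k] (ι → k) := LinearMap.pi fun j => B.flip (y j)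

variable {B t y} [Fintype ι]

variable (y) in
/-- The transpose `f ↦ ∑ j, f(e_j) y_j` of `pairingCoord`. -/
def pairingCoordAdj : Dual k (ι → k) →ₗ[k] R :=
  Fintype.linearCombination k y ∘ₗ (Module.piEquiv ι k k).symm.toLinearMap

lemma dual_apply_pairingCoord (x : T) (f : Dual k (ι → k)) :
    f (pairingCoord B y x) = B x (pairingCoordAdj y f) := by
  obtain ⟨v, rfl⟩ := (Module.piEquiv ι k k).surjective f
  simp [pairingCoord, pairingCoordAdj, Fintype.linearCombination_apply, Module.piEquiv_apply_apply,
    mul_comm]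

variable [DecidableEq ι]

lemma pairingCoord_comp_linearCombination (h : ∀ i j, B (t i) (y j) = if i = j then 1 else 0) :
    pairingCoord B y ∘ₗ Fintype.linearCombination k t = LinearMap.id := by
  refine LinearMap.pi_ext' fun i => LinearMap.ext_ring (funext fun j => ?_)
  simp [pairingCoord, h, Pi.single_apply, eq_comm]

lemma dualMap_linearCombination_comp_pairingCoordAdj
    (h : ∀ i j, B (t i) (y j) = if i = j then 1 else 0) :
    ((Fintype.linearCombination k t).dualMap ∘ₗ B.flip) ∘ₗ pairingCoordAdj y = LinearMap.id := by
  refine LinearMap.ext fun f => LinearMap.ext fun c => ?_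
  change B (Fintype.linearCombination k t c) (pairingCoordAdj y f) = f c
  rw [← dual_apply_pairingCoord]
  exact congrArg f (LinearMap.congr_fun (pairingCoord_comp_linearCombination h) c)

end DualFamilies

section Baire

variable {𝕜 E F : Type*} [NontriviallyNormedField 𝕜] [AddCommGroup E] [Module 𝕜 E]
  [TopologicalSpace E] [ContinuousAdd E] [ContinuousSMul 𝕜 E] [BaireSpace E] [AddCommGroup F]
  [Module 𝕜 F] [TopologicalSpace F] [T1Space F]

theorem eventually_eq_zero_of_forall_eventually_apply_eq_zero {f : ℕ → E →L[𝕜] F}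
    (h : ∀ x, ∀ᶠ i in atTop, f i x = 0) : ∀ᶠ i in atTop, f i = 0 := by
  let K (n : ℕ) : Submodule 𝕜 E := ⨅ i ≥ n, LinearMap.ker (f i).toLinearMap
  have mem_K {n : ℕ} {x : E} : x ∈ K n ↔ ∀ i ≥ n, f i x = 0 := by
    simp only [K, Submodule.mem_iInf, LinearMap.mem_ker, ContinuousLinearMap.coe_coe]
  have isClosed_K (n : ℕ) : IsClosed (K n : Set E) := by
    simp only [K, Submodule.coe_iInf]
    exact isClosed_biInter fun i _ => (f i).isClosed_ker
  have iUnion_K : ⋃ n, (K n : Set E) = Set.univ := by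
    refine Set.eq_univ_of_forall fun x => Set.mem_iUnion.2 ?_
    obtain ⟨n, hn⟩ := eventually_atTop.1 (h x)
    exact ⟨n, mem_K.2 hn⟩
  obtain ⟨n, hn⟩ := nonempty_interior_of_iUnion_of_closed isClosed_K iUnion_K
  have K_eq_top : K n = ⊤ := (K n).eq_top_of_nonempty_interior' hn
  filter_upwards [eventually_ge_atTop n] with i hi
  ext x
  exact mem_K.1 (K_eq_top ▸ Submodule.mem_top) i hi

end Baire

section FiniteSupport

variable {M : Type*} [Zero M]

lemma eventually_finsupp_apply_eq_zero (u : ℕ →₀ M) : ∀ᶠ i in atTop, u i = 0 := by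
  rw [← Nat.cofinite_eq_atTop]
  exact u.hasFiniteSupport

lemma eventually_forall_ge_finsupp_apply_eq_zero {w : ℕ → ℕ →₀ M}
    (h : ∀ᶠ i in atTop, w i = 0) : ∀ᶠ n in atTop, ∀ i, ∀ j ≥ n, w i j = 0 := by
  obtain ⟨m, hm⟩ := eventually_atTop.1 h
  have small : ∀ᶠ n in atTop, ∀ i ∈ Finset.range m, ∀ j ≥ n, w i j = 0 :=
    (Filter.eventually_all_finset _).2 fun i _ =>
      eventually_forall_ge_atTop.2 (eventually_finsupp_apply_eq_zero (w i))
  filter_upwards [small] with n hn i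
  rcases lt_or_ge i m with hi | hi
  · exact hn i (Finset.mem_range.2 hi)
  · simp [hm i hi]

end FiniteSupport

noncomputable section Coordinates

/-- The standard basis vector `(δ_i, 0)` of `W`. -/
abbrev basisW (i : ℕ) : TT := (⇑(Finsupp.single i (1 : ℂ)), 0)

/-- The standard basis vector `(0, δ_i)` of `U`. -/
abbrev basisU (i : ℕ) : TT := (0, Finsupp.single i 1)

/-- The vector of `R` that reads off the `i`-th coordinate in the factor `W^♯` of `T`. -/
abbrev dualW (i : ℕ) : RR := (Finsupp.single i 1, 0)

/-- The vector of `R` that reads off the `i`-th coordinate in the factor `U` of `T`. -/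
abbrev dualU (i : ℕ) : RR := (0, ⇑(Finsupp.single i (1 : ℂ)))

lemma pairB_apply (x : TT) (y : RR) :
    pairB x y = Finsupp.linearCombination ℂ x.1 y.1 + Finsupp.linearCombination ℂ y.2 x.2 := rfl

lemma linearCombination_single_one (i : ℕ) (u : ℕ →₀ ℂ) :
    Finsupp.linearCombination ℂ ⇑(Finsupp.single i (1 : ℂ)) u = u i := by
  rw [Finsupp.single_eq_pi_single]
  simp [Finsupp.linearCombination_apply, Finsupp.sum, Pi.single_apply, eq_comm]

lemma pairB_basisW (i : ℕ) (y : RR) : pairB (basisW i) y = y.1 i := by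
  simp [pairB_apply, linearCombination_single_one]

lemma pairB_dualW (x : TT) (i : ℕ) : pairB x (dualW i) = x.1 i := by
  simp [pairB_apply]

lemma pairB_dualU (x : TT) (i : ℕ) : pairB x (dualU i) = x.2 i := by
  simp [pairB_apply, linearCombination_single_one]

lemma ext_pairB {x x' : TT} (h : ∀ y, pairB x y = pairB x' y) : x = x' := by
  refine Prod.ext (funext fun i => ?_) (Finsupp.ext fun i => ?_)
  · rw [← pairB_dualW, ← pairB_dualW, h]
  · rw [← pairB_dualU, ← pairB_dualU, h]

lemma pairB_eq_zero {x : TT} {y : RR} (hx : x.2 = 0) (h : ∀ i, x.1 i = 0 ∨ y.1 i = 0) :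
    pairB x y = 0 := by
  rw [pairB_apply, hx, map_zero, add_zero, Finsupp.linearCombination_apply]
  refine Finset.sum_eq_zero fun i _ => ?_
  rcases h i with hi | hi <;> simp [hi]

lemma continuous_pairB_inl (y : RR) : Continuous fun ω : ℕ → ℂ => pairB (ω, 0) y := by
  simp only [pairB_apply, map_zero, add_zero, Finsupp.linearCombination_apply, Finsupp.sum]
  fun_prop

lemma mem_Wsharp {x : TT} : x ∈ Wsharp ↔ x.2 = 0 := by
  rw [Wsharp, LinearMap.range_inl, LinearMap.mem_ker, LinearMap.snd_apply]

lemma ker_piU : LinearMap.ker piU = Wsharp := (LinearMap.range_inl ..).symm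

lemma mem_Vsub {x : TT} : x ∈ Vsub ↔ ∃ u : ℕ →₀ ℂ, ⇑u = x.1 :=
  ⟨fun ⟨u, hu⟩ => ⟨u.1, congrArg Prod.fst hu⟩, fun ⟨u, hu⟩ => ⟨(u, x.2), Prod.ext hu rfl⟩⟩

lemma Wsharp_inf_Vsub : Wsharp ⊓ Vsub = Wsub := by
  ext x
  rw [Submodule.mem_inf, mem_Wsharp, mem_Vsub]
  constructor
  · rintro ⟨h, u, hu⟩
    exact ⟨u, Prod.ext hu h.symm⟩
  · rintro ⟨u, rfl⟩
    exact ⟨rfl, u, rfl⟩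

end Coordinates

noncomputable section Truncation

/-- The first `n` basis vectors of `W`, followed by the first `n` basis vectors of `U`. -/
def blockBasis (n : ℕ) : Fin n ⊕ Fin n → TT :=
  Sum.elim (fun i => basisW i) fun i => basisU i

/-- The family in `R` dual to `blockBasis`. -/
def dualBlockBasis (n : ℕ) : Fin n ⊕ Fin n → RR :=
  Sum.elim (fun i => dualW i) fun i => dualU i

/-- The first `n` coordinates in `W^♯` and in `U` of a vector of `T`. -/
def blockCoord (n : ℕ) : TT →ₗ[ℂ] (Fin n ⊕ Fin n → ℂ) := pairingCoord pairB (dualBlockBasis n)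

/-- The vector of `V` with given first `n` coordinates in `W` and in `U`, and no others. -/
def blockIncl (n : ℕ) : (Fin n ⊕ Fin n → ℂ) →ₗ[ℂ] TT := Fintype.linearCombination ℂ (blockBasis n)

lemma pairB_blockBasis (n : ℕ) (i j : Fin n ⊕ Fin n) :
    pairB (blockBasis n i) (dualBlockBasis n j) = if i = j then 1 else 0 := by
  rcases i with i | i <;> rcases j with j | j <;>
    simp [blockBasis, dualBlockBasis, pairB_dualW, pairB_dualU, Finsupp.single_apply, Fin.val_inj]

lemma blockCoord_comp_blockIncl (n : ℕ) : blockCoord n ∘ₗ blockIncl n = LinearMap.id :=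
  pairingCoord_comp_linearCombination (pairB_blockBasis n)

lemma mem_ker_blockCoord {n : ℕ} {x : TT} :
    x ∈ LinearMap.ker (blockCoord n) ↔ ∀ i < n, x.1 i = 0 ∧ x.2 i = 0 := by
  simp [blockCoord, pairingCoord, dualBlockBasis, funext_iff, pairB_dualW, pairB_dualU,
    Fin.forall_iff, forall_and]

lemma blockIncl_mem_Vsub {n : ℕ} (c : Fin n ⊕ Fin n → ℂ) : blockIncl n c ∈ Vsub := by
  rw [blockIncl, Fintype.linearCombination_apply]
  refine Vsub.sum_mem fun j _ => Vsub.smul_mem _ (mem_Vsub.2 ?_)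
  rcases j with j | j
  exacts [⟨Finsupp.single j 1, rfl⟩, ⟨0, rfl⟩]

lemma blockIncl_snd_eq_zero {n i : ℕ} (hi : n ≤ i) (c : Fin n ⊕ Fin n → ℂ) :
    (blockIncl n c).2 i = 0 := by
  have hne (j : Fin n) : i ≠ j := (j.2.trans_le hi).ne'
  simp [blockIncl, Fintype.linearCombination_apply, blockBasis, Prod.snd_sum, hne]

lemma sub_blockIncl_blockCoord_mem {n : ℕ} {x : TT} (hx : ∀ i ≥ n, x.2 i = 0) :
    x - blockIncl n (blockCoord n x) ∈ Wsharp ⊓ LinearMap.ker (blockCoord n) := by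
  have hker : x - blockIncl n (blockCoord n x) ∈ LinearMap.ker (blockCoord n) := by
    rw [LinearMap.mem_ker, map_sub, sub_eq_zero]
    exact (LinearMap.congr_fun (blockCoord_comp_blockIncl n) _).symm
  refine ⟨mem_Wsharp.2 (Finsupp.ext fun i => ?_), hker⟩
  rcases lt_or_ge i n with hi | hi
  · exact (mem_ker_blockCoord.1 hker i hi).2
  · simp [hx i hi, blockIncl_snd_eq_zero hi]

lemma map_blockIncl_comp_blockCoord_le {n : ℕ} {A : Submodule ℂ TT}
    (hsnd : ∀ x ∈ A, ∀ i ≥ n, x.2 i = 0) (htail : Wsharp ⊓ LinearMap.ker (blockCoord n) ≤ A) :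
    A.map (blockIncl n ∘ₗ blockCoord n) ≤ A := by
  rintro _ ⟨x, hx, rfl⟩
  exact (A.sub_mem_iff_right hx).1 (htail (sub_blockIncl_blockCoord_mem (hsnd x hx)))

/-- The element of the Mackey group acting as `g` on the span of `blockBasis n` and as the
identity on the kernel of `blockCoord n`. -/
def blockMackey (n : ℕ) (g : (Fin n ⊕ Fin n → ℂ) ≃ₗ[ℂ] (Fin n ⊕ Fin n → ℂ)) : Mackey :=
  ⟨(extendByIdEquiv (blockCoord_comp_blockIncl n) g, MulOpposite.op <| extendByIdEquiv
      (dualMap_linearCombination_comp_pairingCoordAdj (pairB_blockBasis n)) g.dualMap),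
    pairing_extendById (C := Dual.eval ℂ _) (fun _ _ => rfl) dual_apply_pairingCoord
      fun _ _ => rfl⟩

lemma blockMackey_apply {n : ℕ} (g : (Fin n ⊕ Fin n → ℂ) ≃ₗ[ℂ] (Fin n ⊕ Fin n → ℂ)) (x : TT) :
    (blockMackey n g).val.1 x = x + blockIncl n (g (blockCoord n x) - blockCoord n x) :=
  extendByIdEquiv_apply (blockCoord_comp_blockIncl n) g x

lemma blockMackey_mem_FinSet {n : ℕ} (g : (Fin n ⊕ Fin n → ℂ) ≃ₗ[ℂ] (Fin n ⊕ Fin n → ℂ)) :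
    blockMackey n g ∈ FinSet := by
  have apply_of_mem_ker {x : TT} (hx : x ∈ LinearMap.ker (blockCoord n)) :
      (blockMackey n g).val.1 x = x := by
    rw [blockMackey_apply, LinearMap.mem_ker.1 hx, map_zero, sub_zero, map_zero, add_zero]
  refine ⟨?_, (Set.finite_lt_nat n).subset fun i hi => ?_⟩
  · rintro _ ⟨x, hx, rfl⟩
    exact Vsub.add_mem hx (blockIncl_mem_Vsub _)
  · by_contra hin
    have hne {j : ℕ} (hj : j < n) : j ≠ i := fun hji => hin (hji ▸ hj)
    rcases hi with hi | hi <;>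
      exact hi (apply_of_mem_ker (mem_ker_blockCoord.2 fun j hj => by simp [hne hj]))

end Truncation

section FiniteBlock

variable {φ : TT ≃ₗ[ℂ] TT} {ψ : RR ≃ₗ[ℂ] RR}

-- So `(ψ (dualU i)).1` is the `i`-th row of the block `W^♯ → U` of `φ`.
lemma IsMackey.apply_snd (h : IsMackey φ ψ) (x : TT) (i : ℕ) :
    (φ x).2 i = pairB x (ψ (dualU i)) := by
  rw [← pairB_dualU, h]

lemma IsMackey.eventually_dualU_fst_eq_zero (h : IsMackey φ ψ) :
    ∀ᶠ i in atTop, (ψ (dualU i)).1 = 0 := by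
  let f (i : ℕ) : (ℕ → ℂ) →L[ℂ] ℂ :=
    ⟨pairB.flip (ψ (dualU i)) ∘ₗ LinearMap.inl ℂ _ _, continuous_pairB_inl _⟩
  have hf (ω : ℕ → ℂ) : ∀ᶠ i in atTop, f i ω = 0 := by
    filter_upwards [eventually_finsupp_apply_eq_zero (φ (ω, 0)).2] with i hi
    exact (h.apply_snd (ω, 0) i).symm.trans hi
  filter_upwards [eventually_eq_zero_of_forall_eventually_apply_eq_zero hf] with i hi
  ext j
  exact (pairB_basisW j _).symm.trans (DFunLike.congr_fun hi _)

lemma IsMackey.eventually_forall_Wsharp_snd_eq_zero (h : IsMackey φ ψ) :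
    ∀ᶠ n in atTop, ∀ x ∈ Wsharp, ∀ i ≥ n, (φ x).2 i = 0 := by
  filter_upwards [eventually_forall_ge_atTop.2 h.eventually_dualU_fst_eq_zero]
    with n hn x hx i hi
  rw [h.apply_snd]
  exact pairB_eq_zero (mem_Wsharp.1 hx) fun j => .inr (by rw [hn i hi, Finsupp.zero_apply])

lemma IsMackey.apply_mem_Wsharp (h : IsMackey φ ψ) {x : TT} (hx : x ∈ Wsharp)
    (hsupp : ∀ i, x.1 i = 0 ∨ φ (basisW i) ∈ Wsharp) : φ x ∈ Wsharp := by
  refine mem_Wsharp.2 (Finsupp.ext fun j => ?_)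
  rw [h.apply_snd]
  refine pairB_eq_zero (mem_Wsharp.1 hx) fun i => (hsupp i).imp_right fun hi => ?_
  rw [← pairB_basisW, ← h.apply_snd, mem_Wsharp.1 hi, Finsupp.zero_apply]

lemma IsMackey.eventually_forall_apply_mem_Wsharp (h : IsMackey φ ψ) :
    ∀ᶠ n in atTop, ∀ x ∈ Wsharp ⊓ LinearMap.ker (blockCoord n), φ x ∈ Wsharp := by
  filter_upwards [eventually_forall_ge_finsupp_apply_eq_zero h.eventually_dualU_fst_eq_zero]
    with n hn x ⟨hx, hker⟩
  refine h.apply_mem_Wsharp hx fun j => ?_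
  rcases lt_or_ge j n with hj | hj
  · exact .inl (mem_ker_blockCoord.1 hker j hj).1
  · refine .inr (mem_Wsharp.2 (Finsupp.ext fun i => ?_))
    rw [h.apply_snd, pairB_basisW, hn i j hj, Finsupp.zero_apply]

theorem eventually_map_Wsharp_inf_ker_eq (a : Mackey) :
    ∀ᶠ n in atTop, Wsharp.map a.val.1.toLinearMap ⊓ LinearMap.ker (blockCoord n) =
      Wsharp ⊓ LinearMap.ker (blockCoord n) := by
  filter_upwards [a.2.eventually_forall_Wsharp_snd_eq_zero,
    (a⁻¹).2.eventually_forall_apply_mem_Wsharp] with n hsnd hmem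
  refine le_antisymm ?_ fun x hx => ⟨⟨_, hmem x hx, a.val.1.apply_symm_apply x⟩, hx.2⟩
  rintro _ ⟨⟨x, hx, rfl⟩, hker⟩
  refine ⟨mem_Wsharp.2 (Finsupp.ext fun i => ?_), hker⟩
  rcases lt_or_ge i n with hi | hi
  exacts [(mem_ker_blockCoord.1 hker i hi).2, hsnd x hx i hi]

end FiniteBlock

section Degree

theorem deg_eq_finrank_sub_finrank {D : Type*} [AddCommGroup D] [Module ℂ D]
    [FiniteDimensional ℂ D] {φ : TT ≃ₗ[ℂ] TT} {r : TT →ₗ[ℂ] D}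
    (hr : Wsharp.map φ.toLinearMap ⊓ LinearMap.ker r = Wsharp ⊓ LinearMap.ker r) :
    deg φ = (finrank ℂ ((Wsharp.map φ.toLinearMap).map r) : ℤ) - finrank ℂ (Wsharp.map r) := by
  have ker_comp_symm :
      LinearMap.ker (piU ∘ₗ φ.symm.toLinearMap) = Wsharp.map φ.toLinearMap := by
    rw [LinearMap.ker_comp, ker_piU, map_equiv_eq_comap_symm]
  have himage := finrank_map_add_finrank_map_inf_ker (f := piU) (h := r)
    (A := Wsharp.map φ.toLinearMap) (hr.le.trans (inf_le_left.trans ker_piU.ge))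
  have hpreimage := finrank_map_add_finrank_map_inf_ker (f := piU ∘ₗ φ.symm.toLinearMap) (h := r)
    (A := Wsharp) (hr.ge.trans (inf_le_left.trans ker_comp_symm.ge))
  rw [ker_piU, inf_comm] at himage
  rw [ker_comp_symm, Submodule.map_comp] at hpreimage
  rw [deg]
  lia

theorem deg_eq_of_map_Wsharp_eq {a b : Mackey}
    (h : Wsharp.map a.val.1.toLinearMap = Wsharp.map b.val.1.toLinearMap) :
    deg a.val.1 = deg b.val.1 := by
  obtain ⟨n, hn⟩ := (eventually_map_Wsharp_inf_ker_eq a).exists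
  rw [deg_eq_finrank_sub_finrank hn, h, deg_eq_finrank_sub_finrank (h ▸ hn)]

lemma eventually_forall_apply_eq_of_mem_FinSet {a : Mackey} (ha : a ∈ FinSet) :
    ∀ᶠ n in atTop, ∀ x ∈ Wsharp ⊓ LinearMap.ker (blockCoord n), a.val.1 x = x := by
  have basisW_fixed : ∀ᶠ i in atTop, a.val.1 (basisW i) = basisW i := by
    rw [← Nat.cofinite_eq_atTop]
    exact ha.2.subset fun i => .inl
  filter_upwards [eventually_forall_ge_atTop.2 basisW_fixed] with n hn x ⟨hx, hker⟩
  refine ext_pairB fun y => ?_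
  rw [a.2, ← sub_eq_zero, ← map_sub]
  refine pairB_eq_zero (mem_Wsharp.1 hx) fun i => ?_
  rcases lt_or_ge i n with hi | hi
  · exact .inl (mem_ker_blockCoord.1 hker i hi).1
  · refine .inr ?_
    rw [← pairB_basisW, map_sub, ← a.2, hn i hi, sub_self]

theorem deg_eq_zero_of_mem_FinSet {a : Mackey} (ha : a ∈ FinSet) : deg a.val.1 = 0 := by
  obtain ⟨n, hfix, htail⟩ := ((eventually_forall_apply_eq_of_mem_FinSet ha).and
    (eventually_map_Wsharp_inf_ker_eq a)).exists
  have hker : Wsharp ⊓ LinearMap.ker (blockCoord n ∘ₗ a.val.1.toLinearMap) =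
      Wsharp ⊓ LinearMap.ker (blockCoord n) := by
    ext x
    refine and_congr_right fun hx => ⟨fun hker => ?_, fun hker => ?_⟩
    · have himage : a.val.1 x ∈ Wsharp ⊓ LinearMap.ker (blockCoord n) :=
        htail.le ⟨⟨x, hx, rfl⟩, hker⟩
      exact a.val.1.injective (hfix _ himage) ▸ himage.2
    · exact (congrArg (blockCoord n) (hfix x ⟨hx, hker⟩)).trans hker
  rw [deg_eq_finrank_sub_finrank htail, ← Submodule.map_comp, finrank_map_eq_of_inf_ker_eq hker,
    sub_self]

theorem exists_mem_FinSet_map_Wsharp_eq {a : Mackey} (ha : deg a.val.1 = 0) :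
    ∃ b ∈ FinSet, Wsharp.map b.val.1.toLinearMap = Wsharp.map a.val.1.toLinearMap := by
  obtain ⟨n, hsnd, htail⟩ := (a.2.eventually_forall_Wsharp_snd_eq_zero.and
    (eventually_map_Wsharp_inf_ker_eq a)).exists
  have hfinrank : finrank ℂ (Wsharp.map (blockCoord n)) =
      finrank ℂ ((Wsharp.map a.val.1.toLinearMap).map (blockCoord n)) := by
    have := deg_eq_finrank_sub_finrank htail
    lia
  obtain ⟨g, hg⟩ := exists_linearEquiv_map_eq_of_finrank_eq hfinrank
  refine ⟨blockMackey n g, blockMackey_mem_FinSet g,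
    map_extendByIdEquiv_eq (blockCoord_comp_blockIncl n)
    (map_blockIncl_comp_blockCoord_le ?_ inf_le_left)
    (map_blockIncl_comp_blockCoord_le ?_ (htail.ge.trans inf_le_left)) htail.symm hg⟩
  · intro x hx i _
    rw [mem_Wsharp.1 hx, Finsupp.zero_apply]
  · rintro _ ⟨x, hx, rfl⟩
    exact hsnd x hx

end Degree

section Stabilizer

lemma map_Wsharp_mul (a b : Mackey) : Wsharp.map (a * b).val.1.toLinearMap =
    (Wsharp.map b.val.1.toLinearMap).map a.val.1.toLinearMap :=
  Submodule.map_comp _ _ _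

lemma Wsharp_le_map_of_Wsub_le_map {a : Mackey} (h : Wsub ≤ Wsharp.map a.val.1.toLinearMap) :
    Wsharp ≤ Wsharp.map a.val.1.toLinearMap := by
  have symm_basisW (i : ℕ) : (a⁻¹).val.1 (basisW i) ∈ Wsharp := by
    obtain ⟨x, hx, hxi⟩ := h ⟨Finsupp.single i 1, rfl⟩
    exact (a.val.1.symm_apply_eq.2 hxi.symm).symm ▸ hx
  intro x hx
  exact ⟨_, (a⁻¹).2.apply_mem_Wsharp hx fun i => .inr (symm_basisW i), a.val.1.apply_symm_apply x⟩

theorem map_Wsharp_eq_of_mem_StW {a : Mackey} (ha : a ∈ StW) :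
    Wsharp.map a.val.1.toLinearMap = Wsharp := by
  have hle := Wsharp_le_map_of_Wsub_le_map (ha.ge.trans inf_le_left)
  refine le_antisymm (fun x hx => ?_) hle
  have sub_fst : x - (x.1, 0) = (0, x.2) := Prod.ext (sub_self _) (sub_zero _)
  have snd_mem_map : (0, x.2) ∈ Wsharp.map a.val.1.toLinearMap :=
    sub_fst ▸ Submodule.sub_mem _ hx (hle ⟨x.1, rfl⟩)
  have snd_mem_Wsub : (0, x.2) ∈ Wsub := ha.le ⟨snd_mem_map, mem_Vsub.2 ⟨0, rfl⟩⟩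
  have snd_mem_Wsharp : (0, x.2) ∈ Wsharp := (Wsharp_inf_Vsub.ge snd_mem_Wsub).1
  rw [mem_Wsharp] at snd_mem_Wsharp ⊢
  exact snd_mem_Wsharp

lemma mem_StW_of_map_Wsharp_eq {a : Mackey} (h : Wsharp.map a.val.1.toLinearMap = Wsharp) :
    a ∈ StW :=
  (congrArg (· ⊓ Vsub) h).trans Wsharp_inf_Vsub

end Stabilizer

open Pointwise in
/-- An element of `G(T,R)` has degree `0` iff it is a product of an element of `Fin`
and an element of `St_W`. -/
theorem stmt15 : {a : Mackey | deg a.val.1 = 0} = FinSet * StW := by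
  ext a
  rw [Set.mem_ofPred_eq, Set.mem_mul]
  constructor
  · intro hdeg
    obtain ⟨b, hb, hba⟩ := exists_mem_FinSet_map_Wsharp_eq hdeg
    refine ⟨b, hb, b⁻¹ * a, mem_StW_of_map_Wsharp_eq ?_, mul_inv_cancel_left b a⟩
    rw [map_Wsharp_mul, ← hba, ← map_Wsharp_mul, inv_mul_cancel]
    exact Submodule.map_id Wsharp
  · rintro ⟨b, hb, s, hs, rfl⟩
    have hbs : Wsharp.map (b * s).val.1.toLinearMap = Wsharp.map b.val.1.toLinearMap := by
      rw [map_Wsharp_mul, map_Wsharp_eq_of_mem_StW hs]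
    rw [deg_eq_of_map_Wsharp_eq hbs, deg_eq_zero_of_mem_FinSet hb]
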